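/- Let d ↦ n(d) be a function with n(d) → ∞ and d/n(d) → 0 as d → ∞. For each d, let X_1, …, X_{n(d)} be i.i.d. d-dimensional standard normal random vectors N_d(0, I), let S_d = (1/n(d)) Σ_{j=1}^{n(d)} X_j X_j^t, and S*_d = √(n(d)/d)(S_d − I). Then ‖S*_d‖₂ → 2 almost surely as d → ∞; in fact λ_1(S*_d) → −2 and λ_d(S*_d) → 2 almost surely. -/

import Mathlib

open MeasureTheory ProbabilityTheory Filter Matrix

/-- The eigenvalues of a real symmetric `d × d` matrix, sorted in increasing order,
so that `sortedEigs A i` is `λ_{i+1}(A)` with `λ_1(A) ≤ … ≤ λ_d(A)`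
(junk value `0` if the matrix is not symmetric). -/
noncomputable def sortedEigs {d : ℕ} (A : Matrix (Fin d) (Fin d) ℝ) : Fin d → ℝ :=
  if h : A.IsHermitian then h.eigenvalues ∘ Tuple.sort h.eigenvalues else 0

/-- The spectral norm `‖A‖₂ = max (|λ_1(A)|, |λ_d(A)|)` of a symmetric matrix,
i.e. the largest absolute value of an eigenvalue. -/
noncomputable def specNorm {d : ℕ} (A : Matrix (Fin d) (Fin d) ℝ) : ℝ :=
  ⨆ i : Fin d, |sortedEigs A i|

/-!
Householder reflections, applied alternately from the left and from the right, bring an `n × d`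
Gaussian matrix `G` to upper bidiagonal form. By rotation invariance of the Gaussian law, each step
leaves a smaller Gaussian matrix, so the squares of the diagonal and superdiagonal entries are
chi-squared variables with `n - i` and `d - 1 - i` degrees of freedom. Chernoff bounds and
Borel–Cantelli show that almost surely, for all large `d`, every one of them is close to its mean.

On that event the problem is deterministic. Up to an orthogonal change of variables, the quadratic
form of `Gᵀ G - n I` is that of a tridiagonal matrix whose diagonal is `o(√(n d))` and whose
off-diagonal entries are at most `(1 + o(1)) √(n d)`, hence it is at most `(2 + o(1)) √(n d)` in
absolute value. Only the first few off-diagonal entries are used for the converse: they are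
`(1 - o(1)) √(n d)`, and the vectors `(1, ±1, 1, ±1, …, 0, 0, …)` supported there attain
`±(2 - o(1)) √(n d)`. Dividing by `√(n d)` turns `Gᵀ G - n I` into `S*`.
-/

section Spectral

open scoped MatrixOrder

variable {ι : Type*} [Fintype ι] [DecidableEq ι] {A : Matrix ι ι ℝ}

lemma eigenvalues_le_iff (hA : A.IsHermitian) {C : ℝ} :
    (∀ i, hA.eigenvalues i ≤ C) ↔ ∀ x : ι → ℝ, x ⬝ᵥ A *ᵥ x ≤ C * (x ⬝ᵥ x) := by
  have hle : A ≤ algebraMap ℝ (Matrix ι ι ℝ) C ↔ ∀ i, hA.eigenvalues i ≤ C := by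
    rw [le_algebraMap_iff_spectrum_le hA.isSelfAdjoint, hA.spectrum_real_eq_range_eigenvalues,
      Set.forall_mem_range]
  have hsub : (algebraMap ℝ (Matrix ι ι ℝ) C - A).IsHermitian :=
    (IsSelfAdjoint.algebraMap _ (IsSelfAdjoint.all C)).sub hA
  rw [← hle, Matrix.le_iff, posSemidef_iff_dotProduct_mulVec, and_iff_right hsub]
  simp [sub_mulVec, Algebra.algebraMap_eq_smul_one, smul_mulVec]

lemma le_eigenvalues_iff (hA : A.IsHermitian) {C : ℝ} :
    (∀ i, C ≤ hA.eigenvalues i) ↔ ∀ x : ι → ℝ, C * (x ⬝ᵥ x) ≤ x ⬝ᵥ A *ᵥ x := by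
  have hle : algebraMap ℝ (Matrix ι ι ℝ) C ≤ A ↔ ∀ i, C ≤ hA.eigenvalues i := by
    rw [algebraMap_le_iff_le_spectrum hA.isSelfAdjoint, hA.spectrum_real_eq_range_eigenvalues,
      Set.forall_mem_range]
  have hsub : (A - algebraMap ℝ (Matrix ι ι ℝ) C).IsHermitian :=
    hA.sub (IsSelfAdjoint.algebraMap _ (IsSelfAdjoint.all C))
  rw [← hle, Matrix.le_iff, posSemidef_iff_dotProduct_mulVec, and_iff_right hsub]
  simp [sub_mulVec, Algebra.algebraMap_eq_smul_one, smul_mulVec]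

end Spectral

section SortedEigs

variable {d : ℕ} {A : Matrix (Fin d) (Fin d) ℝ} {c : ℝ}

lemma forall_sortedEigs_iff (hA : A.IsHermitian) {p : ℝ → Prop} :
    (∀ i, p (sortedEigs A i)) ↔ ∀ i, p (hA.eigenvalues i) := by
  simpa only [sortedEigs, hA, dif_pos, Function.comp_apply] using
    (Tuple.sort hA.eigenvalues).forall_congr_right (q := fun i => p (hA.eigenvalues i))

lemma iSup_sortedEigs_le_iff [NeZero d] (hA : A.IsHermitian) :
    ⨆ i, sortedEigs A i ≤ c ↔ ∀ x : Fin d → ℝ, x ⬝ᵥ A *ᵥ x ≤ c * (x ⬝ᵥ x) := by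
  rw [ciSup_le_iff (Set.finite_range _).bddAbove, forall_sortedEigs_iff hA (p := (· ≤ c)),
    eigenvalues_le_iff]

lemma le_iInf_sortedEigs_iff [NeZero d] (hA : A.IsHermitian) :
    c ≤ ⨅ i, sortedEigs A i ↔ ∀ x : Fin d → ℝ, c * (x ⬝ᵥ x) ≤ x ⬝ᵥ A *ᵥ x := by
  rw [le_ciInf_iff (Set.finite_range _).bddBelow, forall_sortedEigs_iff hA (p := (c ≤ ·)),
    le_eigenvalues_iff]

lemma le_iSup_sortedEigs [NeZero d] (hA : A.IsHermitian) {x : Fin d → ℝ} (hx : x ≠ 0)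
    (h : c * (x ⬝ᵥ x) ≤ x ⬝ᵥ A *ᵥ x) : c ≤ ⨆ i, sortedEigs A i :=
  le_of_mul_le_mul_right (h.trans ((iSup_sortedEigs_le_iff hA).1 le_rfl x))
    (dotProduct_star_self_pos_iff.2 hx)

lemma iInf_sortedEigs_le [NeZero d] (hA : A.IsHermitian) {x : Fin d → ℝ} (hx : x ≠ 0)
    (h : x ⬝ᵥ A *ᵥ x ≤ c * (x ⬝ᵥ x)) : ⨅ i, sortedEigs A i ≤ c :=
  le_of_mul_le_mul_right (((le_iInf_sortedEigs_iff hA).1 le_rfl x).trans h)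
    (dotProduct_star_self_pos_iff.2 hx)

lemma specNorm_eq_max (A : Matrix (Fin d) (Fin d) ℝ) :
    specNorm A = max |⨅ i, sortedEigs A i| |⨆ i, sortedEigs A i| := by
  rcases isEmpty_or_nonempty (Fin d) with _ | _
  · simp [specNorm, Real.iSup_of_isEmpty, Real.iInf_of_isEmpty]
  have habove : BddAbove (Set.range fun i => |sortedEigs A i|) := (Set.finite_range _).bddAbove
  refine le_antisymm (ciSup_le fun i => ?_) (max_le ?_ ?_)
  · exact abs_le_max_abs_abs (ciInf_le (Set.finite_range _).bddBelow i)
      (le_ciSup (Set.finite_range _).bddAbove i)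
  · obtain ⟨i, hi⟩ := exists_eq_ciInf_of_finite (f := sortedEigs A)
    exact hi ▸ le_ciSup habove i
  · obtain ⟨i, hi⟩ := exists_eq_ciSup_of_finite (f := sortedEigs A)
    exact hi ▸ le_ciSup habove i

end SortedEigs

section Reflection

variable {ι : Type*} [Fintype ι] [DecidableEq ι]

lemma mulVec_dotProduct_mulVec_of_mem_orthogonalGroup {Q : Matrix ι ι ℝ}
    (hQ : Q ∈ orthogonalGroup ι ℝ) (x : ι → ℝ) : Q *ᵥ x ⬝ᵥ Q *ᵥ x = x ⬝ᵥ x := by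
  rw [dotProduct_mulVec, ← mulVec_transpose, mulVec_mulVec, (mem_orthogonalGroup_iff' ι ℝ).1 hQ,
    one_mulVec]

/-- The matrix of the orthogonal reflection in the hyperplane `v^⊥` (the identity if `v = 0`,
because then `2 / (v ⬝ᵥ v) = 0`). -/
noncomputable def reflectionMatrix (v : ι → ℝ) : Matrix ι ι ℝ :=
  1 - (2 / (v ⬝ᵥ v)) • vecMulVec v v

lemma transpose_reflectionMatrix (v : ι → ℝ) : (reflectionMatrix v)ᵀ = reflectionMatrix v := by
  simp [reflectionMatrix, transpose_vecMulVec]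

lemma reflectionMatrix_mul_self (v : ι → ℝ) : reflectionMatrix v * reflectionMatrix v = 1 := by
  rcases eq_or_ne v 0 with rfl | hv
  · simp [reflectionMatrix]
  have hvv : v ⬝ᵥ v ≠ 0 := dotProduct_self_eq_zero.not.2 hv
  have hcoeff : 2 / (v ⬝ᵥ v) * (2 / (v ⬝ᵥ v) * (v ⬝ᵥ v)) = 2 / (v ⬝ᵥ v) + 2 / (v ⬝ᵥ v) := by
    field_simp
    norm_num
  simp only [reflectionMatrix, sub_mul, mul_sub, one_mul, mul_one, smul_mul_smul_comm,
    vecMulVec_mul_vecMulVec, smul_smul, vecMulVec_smul, mul_assoc, hcoeff, add_smul]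
  abel

lemma reflectionMatrix_mem_orthogonalGroup (v : ι → ℝ) :
    reflectionMatrix v ∈ orthogonalGroup ι ℝ := by
  rw [mem_orthogonalGroup_iff, transpose_reflectionMatrix, reflectionMatrix_mul_self]

lemma reflectionMatrix_sub_mulVec {x y : ι → ℝ} (h : x ⬝ᵥ x = y ⬝ᵥ y) :
    reflectionMatrix (x - y) *ᵥ x = y := by
  rcases eq_or_ne x y with rfl | hxy
  · simp [reflectionMatrix]
  have hne : (x - y) ⬝ᵥ (x - y) ≠ 0 := dotProduct_self_eq_zero.not.2 (sub_ne_zero.2 hxy)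
  have hdot : 2 * ((x - y) ⬝ᵥ x) = (x - y) ⬝ᵥ (x - y) := by
    simp only [sub_dotProduct, dotProduct_sub, dotProduct_comm y x]
    linarith
  have hcoeff : 2 / ((x - y) ⬝ᵥ (x - y)) * ((x - y) ⬝ᵥ x) = 1 := by
    rw [div_mul_eq_mul_div, hdot, div_self hne]
  rw [reflectionMatrix, sub_mulVec, one_mulVec, smul_mulVec, vecMulVec_mulVec, op_smul_eq_smul,
    smul_smul, hcoeff, one_smul, sub_sub_cancel]

end Reflection

section Householder

variable {n d : ℕ}

/-- The first standard basis vector of `ℝⁿ`, with no positivity requirement on `n`. -/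
def firstBasisVector (n : ℕ) : Fin n → ℝ := fun i => if (i : ℕ) = 0 then 1 else 0

lemma firstBasisVector_succ (n : ℕ) : firstBasisVector (n + 1) = Pi.single 0 1 := by
  ext i
  simp [firstBasisVector, Pi.single_apply]

/-- The Householder reflection carrying `g` to `‖g‖ e₁`. -/
noncomputable def householder (g : Fin n → ℝ) : Matrix (Fin n) (Fin n) ℝ :=
  reflectionMatrix (g - √(g ⬝ᵥ g) • firstBasisVector n)

lemma householder_mulVec_self (g : Fin n → ℝ) :
    householder g *ᵥ g = √(g ⬝ᵥ g) • firstBasisVector n := by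
  refine reflectionMatrix_sub_mulVec ?_
  cases n with
  | zero => simp
  | succ n =>
    have hnonneg : 0 ≤ g ⬝ᵥ g := dotProduct_star_self_nonneg g
    simp [firstBasisVector_succ, Real.mul_self_sqrt hnonneg]

lemma householder_mem_orthogonalGroup (g : Fin n → ℝ) :
    householder g ∈ orthogonalGroup (Fin n) ℝ :=
  reflectionMatrix_mem_orthogonalGroup _

/-- One half of a bidiagonalization step: a Householder reflection clears the first column of `G`,
which is then dropped. The result is transposed, so that the next half step clears what was the
first row of the remaining matrix. -/
noncomputable def halfStep (G : Matrix (Fin n) (Fin (d + 1)) ℝ) : Matrix (Fin d) (Fin n) ℝ :=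
  (G.submatrix id Fin.succ)ᵀ * householder (Gᵀ 0)

/-- The entries `c 0, c 1, c 2, …` of the bidiagonal form of `G`, alternately on the diagonal and
the superdiagonal: `c k` is the norm of the first column after `k` half steps. -/
noncomputable def bidiagonalEntry :
    ∀ {n d : ℕ}, Matrix (Fin n) (Fin d) ℝ → ℕ → ℝ
  | _, 0, _, _ => 0
  | _, _ + 1, G, 0 => √(Gᵀ 0 ⬝ᵥ Gᵀ 0)
  | _, _ + 1, G, k + 1 => bidiagonalEntry (halfStep G) k

lemma bidiagonalEntry_nonneg : ∀ {n d : ℕ} (G : Matrix (Fin n) (Fin d) ℝ) (k : ℕ),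
    0 ≤ bidiagonalEntry G k
  | _, 0, _, _ => by simp [bidiagonalEntry]
  | _, _ + 1, _, 0 => Real.sqrt_nonneg _
  | _, _ + 1, G, k + 1 => bidiagonalEntry_nonneg (halfStep G) k

/-- The upper bidiagonal matrix with diagonal `c 0, c 2, c 4, …` and superdiagonal
`c 1, c 3, c 5, …`. -/
def upperBidiagonal (n d : ℕ) (c : ℕ → ℝ) : Matrix (Fin n) (Fin d) ℝ :=
  of fun i j =>
    if (j : ℕ) = i then c (2 * i) else if (j : ℕ) = i + 1 then c (2 * i + 1) else 0

lemma upperBidiagonal_zero (c : ℕ → ℝ) (i : Fin n) :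
    upperBidiagonal n (d + 1) c i 0 = c 0 * firstBasisVector n i := by
  rcases eq_or_ne (i : ℕ) 0 with hi | hi <;>
    simp [upperBidiagonal, firstBasisVector, hi, eq_comm]

lemma upperBidiagonal_succ (c : ℕ → ℝ) (i : Fin n) (j : Fin d) :
    upperBidiagonal n (d + 1) c i j.succ = upperBidiagonal d n (fun k => c (k + 1)) j i := by
  simp only [upperBidiagonal, of_apply, Fin.val_succ]
  grind

/-- The block diagonal matrix `diag(1, U)`. -/
def oneBlock (U : Matrix (Fin d) (Fin d) ℝ) : Matrix (Fin (d + 1)) (Fin (d + 1)) ℝ :=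
  of (Fin.cons (Fin.cons 1 0) fun i => Fin.cons 0 (U i))

lemma oneBlock_mem_orthogonalGroup {U : Matrix (Fin d) (Fin d) ℝ}
    (hU : U ∈ orthogonalGroup (Fin d) ℝ) : oneBlock U ∈ orthogonalGroup (Fin (d + 1)) ℝ := by
  rw [mem_orthogonalGroup_iff] at hU ⊢
  have hentry (i j : Fin d) : ∑ k, U i k * U j k = (1 : Matrix (Fin d) (Fin d) ℝ) i j := by
    rw [← hU]
    simp [mul_apply]
  ext i j
  cases i using Fin.cases <;> cases j using Fin.cases <;>
    simp [oneBlock, mul_apply, Fin.sum_univ_succ, hentry, one_apply, Fin.succ_ne_zero,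
      (Fin.succ_ne_zero _).symm]

lemma mul_oneBlock_zero (G : Matrix (Fin n) (Fin (d + 1)) ℝ) (U : Matrix (Fin d) (Fin d) ℝ)
    (i : Fin n) : (G * oneBlock U) i 0 = G i 0 := by
  simp [oneBlock, mul_apply, Fin.sum_univ_succ]

lemma mul_oneBlock_succ (G : Matrix (Fin n) (Fin (d + 1)) ℝ) (U : Matrix (Fin d) (Fin d) ℝ)
    (i : Fin n) (j : Fin d) :
    (G * oneBlock U) i j.succ = (G.submatrix id Fin.succ * U) i j := by
  simp [oneBlock, mul_apply, Fin.sum_univ_succ]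

-- `Vᵀ e₁ = e₁` is what the induction needs: `V` must not disturb the column that the next
-- reflection sends to a multiple of `e₁`.
theorem exists_orthogonal_mul_mul_eq_upperBidiagonal :
    ∀ {n d : ℕ} (G : Matrix (Fin n) (Fin d) ℝ),
      ∃ U ∈ orthogonalGroup (Fin n) ℝ, ∃ V ∈ orthogonalGroup (Fin d) ℝ,
        Vᵀ *ᵥ firstBasisVector d = firstBasisVector d ∧
        Uᵀ * G * V = upperBidiagonal n d (bidiagonalEntry G)
  | n, 0, G => ⟨1, one_mem _, 1, one_mem _, by simp, Subsingleton.elim _ _⟩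
  | n, d + 1, G => by
    obtain ⟨U, hU, V, hV, hVe, hB⟩ := exists_orthogonal_mul_mul_eq_upperBidiagonal (halfStep G)
    set H := householder (Gᵀ 0)
    have hH : Hᵀ = H := transpose_reflectionMatrix _
    refine ⟨H * V, mul_mem (householder_mem_orthogonalGroup _) hV, oneBlock U,
      oneBlock_mem_orthogonalGroup hU, ?_, ?_⟩
    · ext i
      cases i using Fin.cases <;>
        simp [firstBasisVector_succ, oneBlock]
    ext i j
    rw [transpose_mul, hH]
    cases j using Fin.cases with
    | zero =>
      have hcol : (Vᵀ * H) *ᵥ Gᵀ 0 = √(Gᵀ 0 ⬝ᵥ Gᵀ 0) • firstBasisVector n := by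
        rw [← mulVec_mulVec, householder_mulVec_self, mulVec_smul, hVe]
      rw [mul_oneBlock_zero, upperBidiagonal_zero]
      exact congrFun hcol i
    | succ j =>
      have hrest : Vᵀ * H * G.submatrix id Fin.succ * U =
          (upperBidiagonal d n (bidiagonalEntry (halfStep G)))ᵀ := by
        rw [← hB, halfStep]
        simp only [transpose_mul, transpose_transpose, hH, Matrix.mul_assoc, H]
      rw [mul_oneBlock_succ, upperBidiagonal_succ]
      exact congrFun₂ hrest i j
termination_by n d => n + d

lemma exists_orthogonal_dotProduct_mulVec_eq (G : Matrix (Fin n) (Fin d) ℝ) :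
    ∃ V ∈ orthogonalGroup (Fin d) ℝ, ∀ x : Fin d → ℝ,
      G *ᵥ (V *ᵥ x) ⬝ᵥ G *ᵥ (V *ᵥ x) =
        upperBidiagonal n d (bidiagonalEntry G) *ᵥ x ⬝ᵥ
          upperBidiagonal n d (bidiagonalEntry G) *ᵥ x := by
  obtain ⟨U, hU, V, hV, -, hB⟩ := exists_orthogonal_mul_mul_eq_upperBidiagonal G
  refine ⟨V, hV, fun x => ?_⟩
  rw [← hB, ← mulVec_mulVec, ← mulVec_mulVec,
    mulVec_dotProduct_mulVec_of_mem_orthogonalGroup (transpose_mem_unitaryGroup_iff.2 hU)]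

end Householder

section BidiagonalForm

lemma upperBidiagonal_mulVec {n d : ℕ} (c : ℕ → ℝ) {x : ℕ → ℝ} (hx : ∀ i, d ≤ i → x i = 0)
    (i : Fin n) : (upperBidiagonal n d c *ᵥ fun j : Fin d => x j) i =
      c (2 * i) * x i + c (2 * i + 1) * x (i + 1) := by
  have hsplit (j : ℕ) :
      (if j = i then c (2 * i) else if j = i + 1 then c (2 * i + 1) else 0) * x j =
        (if j = i then c (2 * i) * x i else 0) +
          if j = i + 1 then c (2 * i + 1) * x (i + 1) else 0 := by
    grind
  have hzero (k : ℕ) (a : ℝ) : (if k < d then a * x k else 0) = a * x k := by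
    grind
  simp only [mulVec, dotProduct, upperBidiagonal, of_apply, hsplit]
  rw [Fin.sum_univ_eq_sum_range (fun j => (if j = (i : ℕ) then c (2 * i) * x i else 0) +
    if j = (i : ℕ) + 1 then c (2 * i + 1) * x (i + 1) else 0) d, Finset.sum_add_distrib]
  simp only [Finset.sum_ite_eq', Finset.mem_range, hzero]

lemma upperBidiagonal_mulVec_dotProduct_self {n d : ℕ} (hdn : d ≤ n) (c : ℕ → ℝ) {x : ℕ → ℝ}
    (hx : ∀ i, d ≤ i → x i = 0) :
    (upperBidiagonal n d c *ᵥ fun j : Fin d => x j) ⬝ᵥ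
        (upperBidiagonal n d c *ᵥ fun j : Fin d => x j) =
      ∑ i ∈ Finset.range d, (c (2 * i) * x i + c (2 * i + 1) * x (i + 1)) ^ 2 := by
  simp only [dotProduct, upperBidiagonal_mulVec c hx, ← sq]
  rw [Fin.sum_univ_eq_sum_range (fun i => (c (2 * i) * x i + c (2 * i + 1) * x (i + 1)) ^ 2) n]
  refine (Finset.sum_subset (Finset.range_mono hdn) fun i _ hi => ?_).symm
  have hdi : d ≤ i := not_lt.1 (Finset.mem_range.not.1 hi)
  simp [hx i hdi, hx (i + 1) (by omega)]

variable {a b x : ℕ → ℝ} {d m : ℕ} {ν α β γ : ℝ}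

lemma abs_add_sq_sub_le {a b x y : ℝ} (ha : |a ^ 2 - ν| ≤ α) (hb : b ^ 2 ≤ β)
    (hab : |a * b| ≤ γ) :
    |(a * x + b * y) ^ 2 - ν * x ^ 2| ≤ (α + γ) * x ^ 2 + (β + γ) * y ^ 2 := calc
  _ = |(a ^ 2 - ν) * x ^ 2 + b ^ 2 * y ^ 2 + a * b * (2 * x * y)| := by ring_nf
  _ ≤ |a ^ 2 - ν| * x ^ 2 + b ^ 2 * y ^ 2 + |a * b| * |2 * x * y| := by
    refine (abs_add_three _ _ _).trans_eq ?_
    simp only [abs_mul, abs_sq]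
  _ ≤ α * x ^ 2 + β * y ^ 2 + γ * (x ^ 2 + y ^ 2) := by
    have hxy : |2 * x * y| ≤ x ^ 2 + y ^ 2 :=
      abs_le.2 ⟨by nlinarith [sq_nonneg (x + y)], two_mul_le_add_sq _ _⟩
    gcongr
    exact (abs_nonneg _).trans hab
  _ = _ := by ring

lemma abs_sum_bidiagonal_sub_le (hβ : 0 ≤ β) (hγ : 0 ≤ γ) (hx : x d = 0)
    (ha : ∀ i < d, |a i ^ 2 - ν| ≤ α) (hb : ∀ i < d, b i ^ 2 ≤ β)
    (hab : ∀ i < d, |a i * b i| ≤ γ) :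
    |∑ i ∈ Finset.range d, (a i * x i + b i * x (i + 1)) ^ 2 -
        ν * ∑ i ∈ Finset.range d, x i ^ 2| ≤
      (α + β + 2 * γ) * ∑ i ∈ Finset.range d, x i ^ 2 := by
  have hshift : ∑ i ∈ Finset.range d, x (i + 1) ^ 2 ≤ ∑ i ∈ Finset.range d, x i ^ 2 := by
    have hsucc := Finset.sum_range_succ' (fun i => x i ^ 2) d
    rw [Finset.sum_range_succ, hx] at hsucc
    nlinarith [sq_nonneg (x 0)]
  rw [Finset.mul_sum, ← Finset.sum_sub_distrib]
  calc _ ≤ ∑ i ∈ Finset.range d, ((α + γ) * x i ^ 2 + (β + γ) * x (i + 1) ^ 2) :=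
        (Finset.abs_sum_le_sum_abs _ _).trans <|
          Finset.sum_le_sum fun i hi =>
            have hi := Finset.mem_range.1 hi
            abs_add_sq_sub_le (ha i hi) (hb i hi) (hab i hi)
    _ = (α + γ) * ∑ i ∈ Finset.range d, x i ^ 2 +
          (β + γ) * ∑ i ∈ Finset.range d, x (i + 1) ^ 2 := by
      rw [Finset.sum_add_distrib, Finset.mul_sum, Finset.mul_sum]
    _ ≤ (α + γ) * ∑ i ∈ Finset.range d, x i ^ 2 + (β + γ) * ∑ i ∈ Finset.range d, x i ^ 2 := by
      gcongr
    _ = _ := by ring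

/-- The test sequence `1, σ, σ², …, σᵐ, 0, 0, …`. For `σ = ±1` it nearly attains the extreme
values of the quadratic form of a bidiagonal matrix. -/
def truncatedPowers (σ : ℝ) (m i : ℕ) : ℝ := if i ≤ m then σ ^ i else 0

lemma sum_truncatedPowers_sq {σ : ℝ} (hσ : σ ^ 2 = 1) (hmd : m < d) :
    ∑ i ∈ Finset.range d, truncatedPowers σ m i ^ 2 = m + 1 := by
  have hpow (i : ℕ) : (σ ^ i) ^ 2 = 1 := by rw [pow_right_comm, hσ, one_pow]
  have hsq (i : ℕ) : truncatedPowers σ m i ^ 2 = if i ∈ Finset.range (m + 1) then 1 else 0 := by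
    grind [truncatedPowers]
  rw [Finset.sum_congr rfl fun i _ => hsq i, Finset.sum_ite_mem,
    Finset.inter_eq_right.2 (Finset.range_mono hmd)]
  simp

lemma sum_bidiagonal_truncatedPowers {σ : ℝ} (hσ : σ ^ 2 = 1) (hmd : m < d) :
    ∑ i ∈ Finset.range d,
        (a i * truncatedPowers σ m i + b i * truncatedPowers σ m (i + 1)) ^ 2 =
      ∑ i ∈ Finset.range (m + 1), a i ^ 2 +
        ∑ i ∈ Finset.range m, (b i ^ 2 + 2 * σ * (a i * b i)) := by
  have hpow (i : ℕ) : (σ ^ i) ^ 2 = 1 := by rw [pow_right_comm, hσ, one_pow]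
  have hinner (i : ℕ) (hi : i < m) :
      (a i * truncatedPowers σ m i + b i * truncatedPowers σ m (i + 1)) ^ 2 =
        a i ^ 2 + (b i ^ 2 + 2 * σ * (a i * b i)) := by
    simp only [truncatedPowers, hi.le, Nat.succ_le_of_lt hi, if_true]
    linear_combination (a i + b i * σ) ^ 2 * hpow i + b i ^ 2 * hσ
  have hlast :
      (a m * truncatedPowers σ m m + b m * truncatedPowers σ m (m + 1)) ^ 2 = a m ^ 2 := by
    simp [truncatedPowers, mul_pow, hpow]
  rw [← Finset.sum_subset (Finset.range_mono hmd) fun i _ hi => ?_, Finset.sum_range_succ,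
    Finset.sum_congr rfl fun i hi => hinner i (Finset.mem_range.1 hi), hlast,
    Finset.sum_add_distrib, Finset.sum_range_succ]
  · ring
  · grind [truncatedPowers]

lemma le_sum_bidiagonal_truncatedPowers_sub {σ : ℝ} (hσ : σ ^ 2 = 1) (hmd : m < d) (hβ : 0 ≤ β)
    (ha : ∀ i ≤ m, |a i ^ 2 - ν| ≤ α) (hb : ∀ i < m, b i ^ 2 ≤ β)
    (hab : ∀ i < m, γ ≤ a i * b i) :
    2 * γ * m - (α + β) * (m + 1) ≤
      σ * (∑ i ∈ Finset.range d,
          (a i * truncatedPowers σ m i + b i * truncatedPowers σ m (i + 1)) ^ 2 -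
        ν * (m + 1)) := by
  have habs : |σ| = 1 := by rwa [← sq_eq_sq₀ (abs_nonneg σ) zero_le_one, sq_abs, one_pow]
  have hdiag (i : ℕ) (hi : i ∈ Finset.range (m + 1)) : -α ≤ σ * (a i ^ 2 - ν) := by
    have hi := ha i (Nat.lt_succ_iff.1 (Finset.mem_range.1 hi))
    rw [← one_mul |_|, ← habs, ← abs_mul] at hi
    exact (abs_le.1 hi).1
  have hoff (i : ℕ) (hi : i ∈ Finset.range m) :
      2 * γ - β ≤ σ * (b i ^ 2 + 2 * σ * (a i * b i)) := by
    have hi := Finset.mem_range.1 hi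
    have hsq : -(b i ^ 2) ≤ σ * b i ^ 2 := by nlinarith [sq_nonneg (b i), (abs_le.1 habs.le).1]
    linear_combination hsq + hb i hi + 2 * hab i hi - 2 * (a i * b i) * hσ
  have hdiag_sum := Finset.card_nsmul_le_sum _ _ _ hdiag
  have hoff_sum := Finset.card_nsmul_le_sum _ _ _ hoff
  rw [← Finset.mul_sum, Finset.sum_sub_distrib] at hdiag_sum
  rw [← Finset.mul_sum] at hoff_sum
  simp only [Finset.card_range, nsmul_eq_mul, Finset.sum_const, Nat.cast_add, Nat.cast_one]
    at hdiag_sum hoff_sum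
  rw [sum_bidiagonal_truncatedPowers hσ hmd]
  linarith

end BidiagonalForm

section Typical

/-- `c` behaves like the entries of the bidiagonal form of an `n × d` Gaussian matrix: the
squares of the diagonal and superdiagonal entries differ from the degrees of freedom of their
chi-squared laws by at most `δ √(n d)` and `δ d`, respectively. -/
def IsTypical (δ : ℝ) (n d : ℕ) (c : ℕ → ℝ) : Prop :=
  ∀ i < d, |c (2 * i) ^ 2 - (n - i)| ≤ δ * √(n * d) ∧ |c (2 * i + 1) ^ 2 - (d - 1 - i)| ≤ δ * d

variable {δ : ℝ} {n d m : ℕ} {c : ℕ → ℝ}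

lemma natCast_le_mul_sqrt (hδ : 0 ≤ δ) (hdn : d ≤ δ ^ 2 * n) : (d : ℝ) ≤ δ * √(n * d) := by
  rw [← Real.sqrt_sq hδ, ← Real.sqrt_mul (sq_nonneg δ)]
  exact Real.le_sqrt_of_sq_le (by nlinarith [d.cast_nonneg (α := ℝ)])

lemma sqrt_le_mul_natCast (hδ : 0 ≤ δ) (hdn : d ≤ δ ^ 2 * n) : √(n * d) ≤ δ * n :=
  Real.sqrt_le_iff.2 ⟨by positivity, by nlinarith [n.cast_nonneg (α := ℝ)]⟩

lemma le_of_natCast_le_sq_mul (hδ : 0 ≤ δ) (hδ₁ : δ ≤ 1) (hdn : d ≤ δ ^ 2 * n) : d ≤ n := by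
  have hcast : (d : ℝ) ≤ n :=
    hdn.trans (mul_le_of_le_one_left n.cast_nonneg (pow_le_one₀ hδ hδ₁))
  exact_mod_cast hcast

lemma IsTypical.mono {δ' : ℝ} (h : IsTypical δ n d c) (hδ : δ ≤ δ') : IsTypical δ' n d c :=
  fun i hi => ⟨(h i hi).1.trans (by gcongr), (h i hi).2.trans (by gcongr)⟩

lemma IsTypical.abs_diag_sq_sub_le (h : IsTypical δ n d c) (hδ : 0 ≤ δ)
    (hdn : d ≤ δ ^ 2 * n) {i : ℕ} (hi : i < d) :
    |c (2 * i) ^ 2 - n| ≤ 2 * δ * √(n * d) := by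
  have hid : (i : ℝ) ≤ d := by exact_mod_cast hi.le
  have hdiag := abs_le.1 (h i hi).1
  have hds := natCast_le_mul_sqrt hδ hdn
  refine abs_le.2 ⟨?_, ?_⟩ <;> linarith [i.cast_nonneg (α := ℝ)]

lemma IsTypical.superdiag_sq_le (h : IsTypical δ n d c) {i : ℕ} (hi : i < d) :
    c (2 * i + 1) ^ 2 ≤ (1 + δ) * d := by
  linarith [(abs_le.1 (h i hi).2).2, i.cast_nonneg (α := ℝ)]

lemma IsTypical.abs_diag_mul_superdiag_le (h : IsTypical δ n d c) (hδ : 0 ≤ δ) (hδ₁ : δ ≤ 1)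
    (hdn : d ≤ δ ^ 2 * n) {i : ℕ} (hi : i < d) :
    |c (2 * i) * c (2 * i + 1)| ≤ (1 + δ) * √(n * d) := by
  have hdiag : c (2 * i) ^ 2 ≤ (1 + δ) * n := by
    linarith [(abs_le.1 (h i hi).1).2, sqrt_le_mul_natCast hδ hdn, i.cast_nonneg (α := ℝ),
      mul_le_of_le_one_left (Real.sqrt_nonneg (n * d)) hδ₁]
  refine abs_le_of_sq_le_sq ?_ (by positivity)
  calc (c (2 * i) * c (2 * i + 1)) ^ 2 = c (2 * i) ^ 2 * c (2 * i + 1) ^ 2 := mul_pow _ _ _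
    _ ≤ (1 + δ) * n * ((1 + δ) * d) := by
      gcongr
      exact h.superdiag_sq_le hi
    _ = ((1 + δ) * √(n * d)) ^ 2 := by
      rw [mul_pow, Real.sq_sqrt (by positivity)]
      ring

lemma IsTypical.le_diag_mul_superdiag (h : IsTypical δ n d c) (hc : ∀ k, 0 ≤ c k) (hδ : 0 ≤ δ)
    (hδ₂ : δ ≤ 1 / 2) (hdn : d ≤ δ ^ 2 * n) {i : ℕ} (hi : i < d) (hiδ : i + 1 ≤ δ * d) :
    (1 - 2 * δ) * √(n * d) ≤ c (2 * i) * c (2 * i + 1) := by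
  have hpos : 0 ≤ 1 - 2 * δ := by linarith
  have hdiag : (1 - 2 * δ) * n ≤ c (2 * i) ^ 2 := by
    have hi_le : (i : ℝ) ≤ δ * n := by
      nlinarith [natCast_le_mul_sqrt hδ hdn, sqrt_le_mul_natCast hδ hdn, n.cast_nonneg (α := ℝ)]
    nlinarith [(abs_le.1 (h i hi).1).1, sqrt_le_mul_natCast hδ hdn, hi_le, n.cast_nonneg (α := ℝ)]
  have hsuper : (1 - 2 * δ) * d ≤ c (2 * i + 1) ^ 2 := by
    linarith [(abs_le.1 (h i hi).2).1]
  refine le_of_sq_le_sq ?_ (mul_nonneg (hc _) (hc _))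
  calc ((1 - 2 * δ) * √(n * d)) ^ 2 = (1 - 2 * δ) * n * ((1 - 2 * δ) * d) := by
        rw [mul_pow, Real.sq_sqrt (by positivity)]
        ring
    _ ≤ c (2 * i) ^ 2 * c (2 * i + 1) ^ 2 := by gcongr
    _ = (c (2 * i) * c (2 * i + 1)) ^ 2 := (mul_pow _ _ _).symm

lemma dotProduct_self_eq_sum_range (d : ℕ) (x : ℕ → ℝ) :
    (fun i : Fin d => x i) ⬝ᵥ (fun i : Fin d => x i) = ∑ i ∈ Finset.range d, x i ^ 2 := by
  simp only [dotProduct, ← sq, Fin.sum_univ_eq_sum_range fun i => x i ^ 2]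

theorem IsTypical.abs_upperBidiagonal_form_sub_le (h : IsTypical δ n d c) (hδ : 0 ≤ δ)
    (hδ₁ : δ ≤ 1) (hdn : d ≤ δ ^ 2 * n) (x : Fin d → ℝ) :
    |(upperBidiagonal n d c *ᵥ x) ⬝ᵥ (upperBidiagonal n d c *ᵥ x) - n * (x ⬝ᵥ x)| ≤
      (2 + 6 * δ) * √(n * d) * (x ⬝ᵥ x) := by
  obtain ⟨y, hy, rfl⟩ : ∃ y : ℕ → ℝ, (∀ i, d ≤ i → y i = 0) ∧ (fun i : Fin d => y i) = x :=
    ⟨Function.extend Fin.val x 0,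
      fun i hi => Function.extend_apply' _ _ _ fun ⟨j, hj⟩ => (hj ▸ j.isLt).not_ge hi,
      funext fun i => Fin.val_injective.extend_apply x 0 i⟩
  have hbound := abs_sum_bidiagonal_sub_le (by positivity) (by positivity) (hy d le_rfl)
    (fun i hi => h.abs_diag_sq_sub_le hδ hdn hi) (fun i hi => h.superdiag_sq_le hi)
    (fun i hi => h.abs_diag_mul_superdiag_le hδ hδ₁ hdn hi)
  rw [upperBidiagonal_mulVec_dotProduct_self (le_of_natCast_le_sq_mul hδ hδ₁ hdn) c hy,
    dotProduct_self_eq_sum_range]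
  refine hbound.trans ?_
  gcongr
  nlinarith [natCast_le_mul_sqrt hδ hdn]

theorem IsTypical.exists_le_upperBidiagonal_form_sub (h : IsTypical δ n d c)
    (hc : ∀ k, 0 ≤ c k) (hδ : 0 ≤ δ) (hδ₂ : δ ≤ 1 / 2) (hdn : d ≤ δ ^ 2 * n)
    (hm : 1 ≤ δ * m) (hmd : m + 1 ≤ δ * d) {σ : ℝ} (hσ : σ ^ 2 = 1) :
    ∃ x : Fin d → ℝ, x ≠ 0 ∧ (2 - 10 * δ) * √(n * d) * (x ⬝ᵥ x) ≤
      σ * ((upperBidiagonal n d c *ᵥ x) ⬝ᵥ (upperBidiagonal n d c *ᵥ x) - n * (x ⬝ᵥ x)) := by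
  have hd_lt (i : ℕ) (hi : i ≤ m) : i < d := by
    have hcast : (i : ℝ) < d := by
      have : (i : ℝ) ≤ m := by exact_mod_cast hi
      nlinarith [d.cast_nonneg (α := ℝ)]
    exact_mod_cast hcast
  have hmd_lt : m < d := hd_lt m le_rfl
  have hsmall (i : ℕ) (hi : i < m) : (i : ℝ) + 1 ≤ δ * d := by
    have : (i : ℝ) ≤ m := by exact_mod_cast hi.le
    linarith
  have hnorm : (fun i : Fin d => truncatedPowers σ m i) ⬝ᵥ
      (fun i : Fin d => truncatedPowers σ m i) = (m + 1 : ℝ) := by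
    rw [dotProduct_self_eq_sum_range, sum_truncatedPowers_sq hσ hmd_lt]
  have hbound := le_sum_bidiagonal_truncatedPowers_sub hσ hmd_lt (by positivity)
    (fun i hi => h.abs_diag_sq_sub_le hδ hdn (hd_lt i hi))
    (fun i hi => h.superdiag_sq_le (hd_lt i hi.le))
    (fun i hi => h.le_diag_mul_superdiag hc hδ hδ₂ hdn (hd_lt i hi.le) (hsmall i hi))
  refine ⟨fun i => truncatedPowers σ m i, fun h0 => ?_, ?_⟩
  · rw [h0, zero_dotProduct] at hnorm
    linarith [m.cast_nonneg (α := ℝ)]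
  rw [upperBidiagonal_mulVec_dotProduct_self (x := truncatedPowers σ m)
    (le_of_natCast_le_sq_mul hδ (by linarith) hdn) c fun i hi => if_neg (by omega), hnorm]
  refine le_trans ?_ hbound
  have herror : (1 + δ) * d ≤ 2 * δ * √(n * d) := by
    nlinarith [natCast_le_mul_sqrt hδ hdn, d.cast_nonneg (α := ℝ)]
  have hmain : 0 ≤ √(n * d) * (2 * δ * (m + 1) - 2 + 4 * δ) :=
    mul_nonneg (Real.sqrt_nonneg _) (by linarith)
  nlinarith [mul_le_mul_of_nonneg_right herror (by positivity : (0 : ℝ) ≤ m + 1)]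

end Typical

section ScaledCovariance

variable {δ : ℝ} {n d m : ℕ}

/-- The matrix `S* = √(n / d) (S - I)`, where `S = n⁻¹ Gᵀ G` is the sample covariance matrix of the
rows of `G`. -/
noncomputable def scaledCovariance (G : Matrix (Fin n) (Fin d) ℝ) : Matrix (Fin d) (Fin d) ℝ :=
  √((n : ℝ) / d) • ((n : ℝ)⁻¹ • ∑ j, vecMulVec (G j) (G j) - 1)

lemma scaledCovariance_eq (G : Matrix (Fin n) (Fin d) ℝ) :
    scaledCovariance G = (√(n * d))⁻¹ • (Gᵀ * G - (n : ℝ) • 1) := by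
  have hgram : ∑ j, vecMulVec (G j) (G j) = Gᵀ * G := by
    ext i k
    simp only [Matrix.sum_apply, vecMulVec_apply, mul_apply, transpose_apply]
  rcases n.eq_zero_or_pos with rfl | hn
  · simp [scaledCovariance]
  have hn' : (n : ℝ) ≠ 0 := by positivity
  have hscale : √((n : ℝ) / d) * (n : ℝ)⁻¹ = (√(n * d))⁻¹ := by
    rw [Real.sqrt_div n.cast_nonneg, Real.sqrt_mul n.cast_nonneg, mul_inv, div_eq_mul_inv,
      mul_right_comm, ← div_eq_mul_inv √(n : ℝ), Real.sqrt_div_self]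
  rw [scaledCovariance, hgram, ← hscale, mul_smul, smul_sub (n : ℝ)⁻¹, inv_smul_smul₀ hn']

lemma isHermitian_scaledCovariance (G : Matrix (Fin n) (Fin d) ℝ) :
    (scaledCovariance G).IsHermitian := by
  rw [scaledCovariance_eq, IsHermitian, conjTranspose_eq_transpose_of_trivial]
  simp

lemma dotProduct_scaledCovariance_mulVec (G : Matrix (Fin n) (Fin d) ℝ) (x : Fin d → ℝ) :
    x ⬝ᵥ scaledCovariance G *ᵥ x = (√(n * d))⁻¹ * (G *ᵥ x ⬝ᵥ G *ᵥ x - n * (x ⬝ᵥ x)) := by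
  rw [scaledCovariance_eq, smul_mulVec, sub_mulVec, smul_mulVec, one_mulVec, ← mulVec_mulVec,
    dotProduct_smul, dotProduct_sub, dotProduct_smul, dotProduct_mulVec x, vecMul_transpose,
    smul_eq_mul, smul_eq_mul]

variable {G : Matrix (Fin n) (Fin d) ℝ}

lemma IsTypical.abs_dotProduct_scaledCovariance_mulVec_le
    (h : IsTypical δ n d (bidiagonalEntry G)) (hδ : 0 ≤ δ) (hδ₁ : δ ≤ 1) (hdn : d ≤ δ ^ 2 * n)
    (x : Fin d → ℝ) :
    |x ⬝ᵥ scaledCovariance G *ᵥ x| ≤ (2 + 6 * δ) * (x ⬝ᵥ x) := by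
  have hx : 0 ≤ x ⬝ᵥ x := dotProduct_star_self_nonneg x
  obtain ⟨V, hV, hGV⟩ := exists_orthogonal_dotProduct_mulVec_eq G
  obtain ⟨y, rfl⟩ : ∃ y, V *ᵥ y = x :=
    ⟨Vᵀ *ᵥ x, by rw [mulVec_mulVec, (mem_orthogonalGroup_iff _ ℝ).1 hV, one_mulVec]⟩
  have hbound := h.abs_upperBidiagonal_form_sub_le hδ hδ₁ hdn y
  rw [← hGV, ← mulVec_dotProduct_mulVec_of_mem_orthogonalGroup hV y] at hbound
  rw [dotProduct_scaledCovariance_mulVec, abs_mul, abs_of_nonneg (by positivity)]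
  exact inv_mul_le_of_le_mul₀ (by positivity) (by positivity) (by linarith)

lemma pos_of_natCast_add_one_le_mul (hmd : m + 1 ≤ δ * d) : 0 < d := by
  refine d.pos_of_ne_zero fun hd => ?_
  rw [hd, Nat.cast_zero, mul_zero] at hmd
  linarith [m.cast_nonneg (α := ℝ)]

lemma IsTypical.exists_le_dotProduct_scaledCovariance_mulVec
    (h : IsTypical δ n d (bidiagonalEntry G)) (hδ : 0 ≤ δ) (hδ₂ : δ ≤ 1 / 2)
    (hdn : d ≤ δ ^ 2 * n) (hm : 1 ≤ δ * m) (hmd : m + 1 ≤ δ * d) {σ : ℝ} (hσ : σ ^ 2 = 1) :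
    ∃ x ≠ 0, (2 - 10 * δ) * (x ⬝ᵥ x) ≤ σ * (x ⬝ᵥ scaledCovariance G *ᵥ x) := by
  obtain ⟨V, hV, hGV⟩ := exists_orthogonal_dotProduct_mulVec_eq G
  obtain ⟨y, hy, hbound⟩ := h.exists_le_upperBidiagonal_form_sub (bidiagonalEntry_nonneg G) hδ hδ₂
    hdn hm hmd hσ
  have hnorm := mulVec_dotProduct_mulVec_of_mem_orthogonalGroup hV y
  have hpos : 0 < √(n * d) := by
    have hd : (0 : ℝ) < d := by exact_mod_cast pos_of_natCast_add_one_le_mul hmd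
    have hn : (0 : ℝ) < n := by
      nlinarith [natCast_le_mul_sqrt hδ hdn, n.cast_nonneg (α := ℝ), sq_nonneg δ]
    positivity
  refine ⟨V *ᵥ y, fun h0 => hy ?_, ?_⟩
  · rwa [h0, zero_dotProduct, eq_comm, dotProduct_self_eq_zero] at hnorm
  rw [dotProduct_scaledCovariance_mulVec, hGV, hnorm, mul_left_comm, le_inv_mul_iff₀ hpos]
  linarith

theorem IsTypical.dist_iSup_sortedEigs_le (h : IsTypical δ n d (bidiagonalEntry G)) (hδ : 0 ≤ δ)
    (hδ₂ : δ ≤ 1 / 2) (hdn : d ≤ δ ^ 2 * n) (hm : 1 ≤ δ * m) (hmd : m + 1 ≤ δ * d) :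
    dist (⨆ i, sortedEigs (scaledCovariance G) i) 2 ≤ 10 * δ := by
  have : NeZero d := ⟨(pos_of_natCast_add_one_le_mul hmd).ne'⟩
  have hA := isHermitian_scaledCovariance G
  have hupper : ⨆ i, sortedEigs (scaledCovariance G) i ≤ 2 + 6 * δ :=
    (iSup_sortedEigs_le_iff hA).2 fun x =>
      (abs_le.1 (h.abs_dotProduct_scaledCovariance_mulVec_le hδ (by linarith) hdn x)).2
  obtain ⟨x, hx, hle⟩ :=
    h.exists_le_dotProduct_scaledCovariance_mulVec hδ hδ₂ hdn hm hmd (one_pow 2)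
  have hlower : 2 - 10 * δ ≤ ⨆ i, sortedEigs (scaledCovariance G) i :=
    le_iSup_sortedEigs hA hx (by rwa [one_mul] at hle)
  rw [Real.dist_eq, abs_le]
  constructor <;> linarith

theorem IsTypical.dist_iInf_sortedEigs_le (h : IsTypical δ n d (bidiagonalEntry G)) (hδ : 0 ≤ δ)
    (hδ₂ : δ ≤ 1 / 2) (hdn : d ≤ δ ^ 2 * n) (hm : 1 ≤ δ * m) (hmd : m + 1 ≤ δ * d) :
    dist (⨅ i, sortedEigs (scaledCovariance G) i) (-2) ≤ 10 * δ := by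
  have : NeZero d := ⟨(pos_of_natCast_add_one_le_mul hmd).ne'⟩
  have hA := isHermitian_scaledCovariance G
  have hlower : -(2 + 6 * δ) ≤ ⨅ i, sortedEigs (scaledCovariance G) i :=
    (le_iInf_sortedEigs_iff hA).2 fun x => by
      rw [neg_mul]
      exact (abs_le.1 (h.abs_dotProduct_scaledCovariance_mulVec_le hδ (by linarith) hdn x)).1
  obtain ⟨x, hx, hle⟩ :=
    h.exists_le_dotProduct_scaledCovariance_mulVec hδ hδ₂ hdn hm hmd neg_one_sq
  have hupper : ⨅ i, sortedEigs (scaledCovariance G) i ≤ -(2 - 10 * δ) :=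
    iInf_sortedEigs_le hA hx (by linarith)
  rw [Real.dist_eq, abs_le]
  constructor <;> linarith

end ScaledCovariance

section GaussianMatrix

/-- The standard Gaussian law on `ℝ^ι`. -/
noncomputable abbrev gaussianVector (ι : Type*) [Fintype ι] : Measure (ι → ℝ) :=
  Measure.pi fun _ => gaussianReal 0 1

/-- The product σ-algebra, which `Matrix` does not inherit from the underlying function type. -/
instance matrixMeasurableSpace {m n α : Type*} [MeasurableSpace α] :
    MeasurableSpace (Matrix m n α) :=
  MeasurableSpace.pi

/-- The law of an `m × n` matrix with independent standard Gaussian entries. -/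
noncomputable def gaussianMatrix (m n : Type*) [Fintype m] [Fintype n] :
    Measure (Matrix m n ℝ) :=
  Measure.pi fun _ => gaussianVector n

instance isProbabilityMeasure_gaussianMatrix {m n : Type*} [Fintype m] [Fintype n] :
    IsProbabilityMeasure (gaussianMatrix m n) :=
  inferInstanceAs (IsProbabilityMeasure (Measure.pi fun _ : m => gaussianVector n))

variable {ι κ : Type*} [Fintype ι] [Fintype κ]

lemma measurePreserving_mulVec_gaussianVector [DecidableEq ι] {Q : Matrix ι ι ℝ}
    (hQ : Q ∈ orthogonalGroup ι ℝ) :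
    MeasurePreserving (Q *ᵥ ·) (gaussianVector ι) (gaussianVector ι) := by
  let L := Unitary.linearIsometryEquiv
    ⟨toEuclideanCLM (𝕜 := ℝ) Q, Unitary.map_mem toEuclideanCLM hQ⟩
  have hL : (L ∘ WithLp.toLp 2 : (ι → ℝ) → _) = WithLp.toLp 2 ∘ (Q *ᵥ ·) := by
    ext x i
    rfl
  have hmeas : Measurable (Q *ᵥ ·) := by fun_prop
  have hmap : ((gaussianVector ι).map (Q *ᵥ ·)).map (WithLp.toLp 2) =
      (gaussianVector ι).map (WithLp.toLp 2) := by
    rw [Measure.map_map (by fun_prop) hmeas, ← hL, ← Measure.map_map (by fun_prop) (by fun_prop),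
      map_pi_eq_stdGaussian, stdGaussian_map]
  exact ⟨hmeas, (MeasurableEquiv.toLp 2 (ι → ℝ)).map_measurableEquiv_injective hmap⟩

lemma measurePreserving_mul_gaussianMatrix [DecidableEq κ] {Q : Matrix κ κ ℝ}
    (hQ : Q ∈ orthogonalGroup κ ℝ) :
    MeasurePreserving (· * Q) (gaussianMatrix ι κ) (gaussianMatrix ι κ) := by
  have hrow := measurePreserving_mulVec_gaussianVector (transpose_mem_unitaryGroup_iff.2 hQ)
  simp only [mulVec_transpose] at hrow
  exact measurePreserving_pi _ _ fun _ : ι => hrow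

variable (ι κ) in
lemma measurePreserving_curry_gaussianVector :
    MeasurePreserving (MeasurableEquiv.curry ι κ ℝ) (gaussianVector (ι × κ))
      (gaussianMatrix ι κ) := by
  refine ⟨(MeasurableEquiv.curry ι κ ℝ).measurable, ?_⟩
  simpa only [Measure.infinitePi_eq_pi, gaussianMatrix] using
    Measure.infinitePi_map_curry fun (_ : ι) (_ : κ) => gaussianReal 0 1

variable (ι κ) in
lemma measurePreserving_transpose_gaussianMatrix :
    MeasurePreserving (transpose : Matrix ι κ ℝ → Matrix κ ι ℝ)
      (gaussianMatrix ι κ) (gaussianMatrix κ ι) :=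
  (measurePreserving_curry_gaussianVector κ ι).comp <|
    (measurePreserving_piCongrLeft (fun _ => gaussianReal 0 1) (Equiv.prodComm ι κ)).comp <|
      (measurePreserving_curry_gaussianVector ι κ).symm

end GaussianMatrix

section BidiagonalLaw

variable {n d : ℕ}

lemma measurable_mul_householder :
    Measurable fun p : (Fin n → ℝ) × Matrix (Fin d) (Fin n) ℝ => p.2 * householder p.1 := by
  have hentry (i : Fin d) (j : Fin n) :
      Measurable fun p : (Fin n → ℝ) × (Fin d → Fin n → ℝ) =>
        (of p.2 * householder p.1) i j := by
    simp only [mul_apply, of_apply, householder, reflectionMatrix, Matrix.sub_apply,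
      Matrix.smul_apply, vecMulVec_apply, smul_eq_mul, dotProduct, Pi.sub_apply, Pi.smul_apply]
    fun_prop
  exact measurable_pi_iff.2 fun i => measurable_pi_iff.2 fun j => hentry i j

lemma measurePreserving_halfStep :
    MeasurePreserving halfStep (gaussianMatrix (Fin n) (Fin (d + 1)))
      (gaussianMatrix (Fin d) (Fin n)) := by
  have hsplit : MeasurePreserving
      (fun G : Matrix (Fin (d + 1)) (Fin n) ℝ => (G 0, G.submatrix Fin.succ id))
      (gaussianMatrix (Fin (d + 1)) (Fin n))
      ((gaussianVector (Fin n)).prod (gaussianMatrix (Fin d) (Fin n))) :=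
    measurePreserving_piFinSuccAbove (fun _ => gaussianVector (Fin n)) 0
  have hreflect : MeasurePreserving
      (fun p : (Fin n → ℝ) × Matrix (Fin d) (Fin n) ℝ => (p.1, p.2 * householder p.1))
      ((gaussianVector (Fin n)).prod (gaussianMatrix (Fin d) (Fin n)))
      ((gaussianVector (Fin n)).prod (gaussianMatrix (Fin d) (Fin n))) :=
    (MeasurePreserving.id _).skew_product measurable_mul_householder <|
      .of_forall fun g =>
        (measurePreserving_mul_gaussianMatrix (householder_mem_orthogonalGroup g)).map_eq
  exact measurePreserving_snd.comp <| hreflect.comp <| hsplit.comp <|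
    measurePreserving_transpose_gaussianMatrix _ _

lemma measurePreserving_transpose_zero :
    MeasurePreserving (fun G : Matrix (Fin n) (Fin (d + 1)) ℝ => Gᵀ 0)
      (gaussianMatrix (Fin n) (Fin (d + 1))) (gaussianVector (Fin n)) :=
  (measurePreserving_eval (fun _ => gaussianVector (Fin n)) 0).comp <|
    measurePreserving_transpose_gaussianMatrix _ _

lemma measurable_dotProduct_self {ι : Type*} [Fintype ι] :
    Measurable fun x : ι → ℝ => x ⬝ᵥ x := by
  simp only [dotProduct]
  fun_prop

lemma measurable_bidiagonalEntry : ∀ (n d k : ℕ),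
    Measurable fun G : Matrix (Fin n) (Fin d) ℝ => bidiagonalEntry G k
  | _, 0, _ => by simp [bidiagonalEntry]
  | _, _ + 1, 0 =>
    (measurable_dotProduct_self.comp measurePreserving_transpose_zero.measurable).sqrt
  | n, d + 1, k + 1 =>
    (measurable_bidiagonalEntry d n k).comp measurePreserving_halfStep.measurable

/-- The law of the squared norm of a standard Gaussian vector in `ℝᵐ`, that is, the chi-squared
distribution with `m` degrees of freedom. -/
noncomputable def chiSquared (m : ℕ) : Measure ℝ :=
  (gaussianVector (Fin m)).map fun x => x ⬝ᵥ x

/-- The number of rows left after `k` half steps starting from an `n × d` matrix. -/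
def remainingRows : ℕ → ℕ → ℕ → ℕ
  | n, _, 0 => n
  | n, d, k + 1 => remainingRows (d - 1) n k

lemma remainingRows_two_mul (n d i : ℕ) : remainingRows n d (2 * i) = n - i := by
  induction i generalizing n d with
  | zero => rfl
  | succ i ih =>
    change remainingRows (n - 1) (d - 1) (2 * i) = _
    rw [ih]
    omega

lemma remainingRows_two_mul_add_one (n d i : ℕ) :
    remainingRows n d (2 * i + 1) = d - 1 - i :=
  remainingRows_two_mul _ _ _

theorem map_bidiagonalEntry_sq : ∀ {n d k : ℕ}, (k + 1) / 2 ≤ n → k / 2 < d →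
    (gaussianMatrix (Fin n) (Fin d)).map (fun G => bidiagonalEntry G k ^ 2) =
      chiSquared (remainingRows n d k)
  | n, d + 1, 0, _, _ => by
    have hsq (G : Matrix (Fin n) (Fin (d + 1)) ℝ) :
        bidiagonalEntry G 0 ^ 2 = Gᵀ 0 ⬝ᵥ Gᵀ 0 :=
      Real.sq_sqrt (dotProduct_star_self_nonneg _)
    simp_rw [hsq]
    rw [remainingRows, chiSquared, ← measurePreserving_transpose_zero.map_eq,
      Measure.map_map measurable_dotProduct_self measurePreserving_transpose_zero.measurable]
    rfl
  | n, d + 1, k + 1, hn, hd => by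
    have ih := map_bidiagonalEntry_sq (n := d) (d := n) (k := k) (by omega) (by omega)
    rw [remainingRows, Nat.add_sub_cancel, ← ih,
      ← (measurePreserving_halfStep (n := n) (d := d)).map_eq,
      Measure.map_map ((measurable_bidiagonalEntry d n k).pow_const 2)
        measurePreserving_halfStep.measurable]
    rfl

end BidiagonalLaw

section ChiSquared

variable {m : ℕ} {s : ℝ}

instance isProbabilityMeasure_chiSquared : IsProbabilityMeasure (chiSquared m) :=
  Measure.isProbabilityMeasure_map measurable_dotProduct_self.aemeasurable

lemma mgf_sq_gaussianReal (hs : s < 1 / 2) :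
    mgf (fun x => x ^ 2) (gaussianReal 0 1) s = (√(1 - 2 * s))⁻¹ := by
  have hdensity (x : ℝ) : gaussianPDFReal 0 1 x • Real.exp (s * x ^ 2) =
      (√(2 * Real.pi))⁻¹ * Real.exp (-(1 / 2 - s) * x ^ 2) := by
    simp only [gaussianPDFReal, smul_eq_mul, NNReal.coe_one, mul_one, sub_zero]
    rw [mul_assoc, ← Real.exp_add]
    ring_nf
  have hscale : Real.pi / (1 / 2 - s) = 2 * Real.pi * (1 - 2 * s)⁻¹ := by
    have hne : 1 - 2 * s ≠ 0 := by linarith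
    rw [show 1 / 2 - s = (1 - 2 * s) / 2 by ring]
    field_simp
  simp only [mgf]
  rw [integral_gaussianReal_eq_integral_smul one_ne_zero]
  simp only [hdensity]
  rw [integral_const_mul, integral_gaussian, hscale,
    Real.sqrt_mul (x := 2 * Real.pi) (by positivity), Real.sqrt_inv,
    inv_mul_cancel_left₀ (by positivity)]

lemma mgf_chiSquared (hs : s < 1 / 2) :
    mgf id (chiSquared m) s = (√(1 - 2 * s))⁻¹ ^ m := by
  have hexp (x : Fin m → ℝ) : Real.exp (s * (x ⬝ᵥ x)) = ∏ i, Real.exp (s * x i ^ 2) := by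
    rw [← Real.exp_sum, dotProduct, Finset.mul_sum]
    simp only [sq]
  rw [chiSquared, mgf_id_map measurable_dotProduct_self.aemeasurable, mgf]
  simp only [hexp]
  rw [integral_fintype_prod_eq_pow (𝕜 := ℝ) (ι := Fin m) fun x => Real.exp (s * x ^ 2),
    ← mgf_sq_gaussianReal hs, Fintype.card_fin, mgf]

lemma integrable_exp_mul_chiSquared (hs : s < 1 / 2) :
    Integrable (fun y => Real.exp (s * y)) (chiSquared m) := by
  have hpos : 0 < √(1 - 2 * s) := Real.sqrt_pos.2 (by linarith)
  refine .of_integral_ne_zero ?_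
  change mgf id (chiSquared m) s ≠ 0
  rw [mgf_chiSquared hs]
  positivity

lemma inv_sqrt_one_sub_le_exp (hs : |s| ≤ 1 / 4) :
    (√(1 - 2 * s))⁻¹ ≤ Real.exp (s + 4 * s ^ 2) := by
  obtain ⟨hs₁, hs₂⟩ := abs_le.1 hs
  have hpos : 0 < 1 - 2 * s := by linarith
  have hlog : 1 - (1 - 2 * s)⁻¹ ≤ Real.log (1 - 2 * s) := Real.one_sub_inv_le_log_of_pos hpos
  have hinv : (1 - 2 * s)⁻¹ ≤ 1 + 2 * s + 8 * s ^ 2 := by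
    rw [inv_le_iff_one_le_mul₀ hpos]
    nlinarith [sq_nonneg s, hs₁, hs₂]
  rw [← Real.exp_log (inv_pos.2 (Real.sqrt_pos.2 hpos)), Real.log_inv, Real.log_sqrt hpos.le]
  gcongr
  linarith

lemma exp_mul_mgf_chiSquared_le (hs : |s| ≤ 1 / 4) (u : ℝ) :
    Real.exp (-s * (m + u)) * mgf id (chiSquared m) s ≤ Real.exp (4 * m * s ^ 2 - s * u) := by
  rw [mgf_chiSquared (by linarith [(abs_le.1 hs).2])]
  calc Real.exp (-s * (m + u)) * (√(1 - 2 * s))⁻¹ ^ m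
    _ ≤ Real.exp (-s * (m + u)) * Real.exp (s + 4 * s ^ 2) ^ m := by
      gcongr
      exact inv_sqrt_one_sub_le_exp hs
    _ = Real.exp (4 * m * s ^ 2 - s * u) := by
      rw [← Real.exp_nat_mul, ← Real.exp_add]
      ring_nf

theorem chiSquared_abs_sub_gt_le {N t : ℝ} (hm : m ≤ N) (hN : 0 < N) (ht : 0 ≤ t)
    (htN : t ≤ 2 * N) :
    (chiSquared m).real {y | t < |y - m|} ≤ 2 * Real.exp (-(t ^ 2 / (16 * N))) := by
  -- `s = t / (8 * N)` minimizes the exponent `4 * N * s ^ 2 - s * t`.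
  set s := t / (8 * N) with hs
  have hs0 : 0 ≤ s := by positivity
  have hs4 : s ≤ 1 / 4 := by rw [hs, div_le_iff₀ (by positivity)]; linarith
  have hexponent : 4 * m * s ^ 2 - s * t ≤ -(t ^ 2 / (16 * N)) := calc
    4 * m * s ^ 2 - s * t ≤ 4 * N * s ^ 2 - s * t := by gcongr
    _ = -(t ^ 2 / (16 * N)) := by
      rw [hs]
      field_simp
      ring
  have hupper : (chiSquared m).real {y | m + t ≤ y} ≤ Real.exp (-(t ^ 2 / (16 * N))) := calc
    _ ≤ Real.exp (-s * (m + t)) * mgf id (chiSquared m) s :=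
      measure_ge_le_exp_mul_mgf _ hs0 (integrable_exp_mul_chiSquared (by linarith))
    _ ≤ Real.exp (4 * m * s ^ 2 - s * t) :=
      exp_mul_mgf_chiSquared_le (by rwa [abs_of_nonneg hs0]) t
    _ ≤ _ := Real.exp_le_exp.2 hexponent
  have hlower : (chiSquared m).real {y | y ≤ m + -t} ≤ Real.exp (-(t ^ 2 / (16 * N))) := calc
    _ ≤ Real.exp (-(-s) * (m + -t)) * mgf id (chiSquared m) (-s) :=
      measure_le_le_exp_mul_mgf _ (by linarith) (integrable_exp_mul_chiSquared (by linarith))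
    _ ≤ Real.exp (4 * m * (-s) ^ 2 - -s * -t) :=
      exp_mul_mgf_chiSquared_le (by rwa [abs_neg, abs_of_nonneg hs0]) (-t)
    _ ≤ _ := by rwa [Real.exp_le_exp, neg_sq, neg_mul_neg]
  have hsubset : {y : ℝ | t < |y - m|} ⊆ {y | m + t ≤ y} ∪ {y | y ≤ m + -t} :=
    fun y (hy : t < |y - m|) =>
      (lt_abs.1 hy).imp (fun h => by grind) fun h => by grind
  have hunion := (measureReal_mono hsubset).trans (measureReal_union_le (μ := chiSquared m) _ _)
  linarith

end ChiSquared

section TypicalWithHighProbability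

variable {δ : ℝ} {n d : ℕ}

lemma gaussianMatrix_abs_bidiagonalEntry_sq_sub_gt_le {k : ℕ} {N t : ℝ} (hkn : (k + 1) / 2 ≤ n)
    (hkd : k / 2 < d) (hrows : remainingRows n d k ≤ N) (hN : 0 < N) (ht : 0 ≤ t)
    (htN : t ≤ 2 * N) :
    (gaussianMatrix (Fin n) (Fin d)).real
        {G | t < |bidiagonalEntry G k ^ 2 - remainingRows n d k|} ≤
      2 * Real.exp (-(t ^ 2 / (16 * N))) := by
  have htail := chiSquared_abs_sub_gt_le hrows hN ht htN
  rwa [← map_bidiagonalEntry_sq hkn hkd, map_measureReal_apply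
    ((measurable_bidiagonalEntry n d k).pow_const 2)
    (measurableSet_lt measurable_const (by fun_prop))] at htail

lemma gaussianMatrix_abs_diag_sq_sub_gt_le (hδ : 0 ≤ δ) (hδ₂ : δ ≤ 2) (hdn : d ≤ n)
    {i : ℕ} (hi : i < d) :
    (gaussianMatrix (Fin n) (Fin d)).real
        {G | δ * √(n * d) < |bidiagonalEntry G (2 * i) ^ 2 - (n - i)|} ≤
      2 * Real.exp (-(δ ^ 2 / 16) * d) := by
  have hn : (0 : ℝ) < n := by exact_mod_cast (by omega : 0 < n)
  have hsqrt : √(n * d) ≤ n := Real.sqrt_le_iff.2 ⟨hn.le, by rw [sq]; gcongr⟩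
  have htail := gaussianMatrix_abs_bidiagonalEntry_sq_sub_gt_le (n := n) (d := d) (k := 2 * i)
    (N := n) (t := δ * √(n * d)) (by omega) (by omega)
    (by rw [remainingRows_two_mul]; exact_mod_cast n.sub_le i) hn (by positivity) (by gcongr)
  rw [remainingRows_two_mul, Nat.cast_sub (by omega)] at htail
  convert htail using 3
  rw [mul_pow, Real.sq_sqrt (by positivity)]
  field_simp

lemma gaussianMatrix_abs_superdiag_sq_sub_gt_le (hδ : 0 ≤ δ) (hδ₂ : δ ≤ 2) (hdn : d ≤ n)
    {i : ℕ} (hi : i < d) :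
    (gaussianMatrix (Fin n) (Fin d)).real
        {G | δ * d < |bidiagonalEntry G (2 * i + 1) ^ 2 - (d - 1 - i)|} ≤
      2 * Real.exp (-(δ ^ 2 / 16) * d) := by
  have hd : (0 : ℝ) < d := by exact_mod_cast (by omega : 0 < d)
  have htail := gaussianMatrix_abs_bidiagonalEntry_sq_sub_gt_le (n := n) (d := d) (k := 2 * i + 1)
    (N := d) (t := δ * d) (by omega) (by omega)
    (by rw [remainingRows_two_mul_add_one]; exact_mod_cast (by omega : d - 1 - i ≤ d)) hd
    (by positivity) (by gcongr)
  rw [remainingRows_two_mul_add_one, Nat.cast_sub (by omega), Nat.cast_sub (by omega),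
    Nat.cast_one] at htail
  convert htail using 3
  rw [mul_pow]
  field_simp

theorem gaussianMatrix_not_isTypical_le (hδ : 0 ≤ δ) (hδ₂ : δ ≤ 2) (hdn : d ≤ n) :
    (gaussianMatrix (Fin n) (Fin d)).real {G | ¬ IsTypical δ n d (bidiagonalEntry G)} ≤
      4 * (d * Real.exp (-(δ ^ 2 / 16) * d)) := by
  let diag (i : ℕ) : Set (Matrix (Fin n) (Fin d) ℝ) :=
    {G | δ * √(n * d) < |bidiagonalEntry G (2 * i) ^ 2 - (n - i)|}
  let superdiag (i : ℕ) : Set (Matrix (Fin n) (Fin d) ℝ) :=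
    {G | δ * d < |bidiagonalEntry G (2 * i + 1) ^ 2 - (d - 1 - i)|}
  have hsubset : {G : Matrix (Fin n) (Fin d) ℝ | ¬ IsTypical δ n d (bidiagonalEntry G)} ⊆
      ⋃ i ∈ Finset.range d, diag i ∪ superdiag i := fun G hG => by
    simp only [Set.mem_ofPred_eq, IsTypical, not_forall, not_and_or, not_le] at hG
    obtain ⟨i, hi, hatypical⟩ := hG
    exact Set.mem_biUnion (Finset.mem_range.2 hi) hatypical
  have hunion (i : ℕ) (hi : i ∈ Finset.range d) :
      (gaussianMatrix (Fin n) (Fin d)).real (diag i ∪ superdiag i) ≤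
        4 * Real.exp (-(δ ^ 2 / 16) * d) := by
    have hi' := Finset.mem_range.1 hi
    linarith [measureReal_union_le (μ := gaussianMatrix (Fin n) (Fin d)) (diag i) (superdiag i),
      gaussianMatrix_abs_diag_sq_sub_gt_le hδ hδ₂ hdn hi',
      gaussianMatrix_abs_superdiag_sq_sub_gt_le hδ hδ₂ hdn hi']
  calc (gaussianMatrix (Fin n) (Fin d)).real {G | ¬ IsTypical δ n d (bidiagonalEntry G)}
    _ ≤ (gaussianMatrix (Fin n) (Fin d)).real (⋃ i ∈ Finset.range d, diag i ∪ superdiag i) :=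
      measureReal_mono hsubset (measure_ne_top _ _)
    _ ≤ ∑ i ∈ Finset.range d, (gaussianMatrix (Fin n) (Fin d)).real (diag i ∪ superdiag i) :=
      measureReal_biUnion_finset_le _ _
    _ ≤ ∑ _i ∈ Finset.range d, 4 * Real.exp (-(δ ^ 2 / 16) * d) := Finset.sum_le_sum hunion
    _ = 4 * (d * Real.exp (-(δ ^ 2 / 16) * d)) := by
      rw [Finset.sum_const, Finset.card_range, nsmul_eq_mul]
      ring

end TypicalWithHighProbability

section AlmostSure

variable {Ω : Type*} [MeasurableSpace Ω] {P : Measure Ω}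

lemma measurePreserving_sample_gaussianMatrix {ι κ : Type*} [Fintype ι] [Fintype κ]
    [IsProbabilityMeasure P] {X : ι → Ω → κ → ℝ} (hmeas : ∀ j, Measurable (X j))
    (hindep : iIndepFun X P) (hgauss : ∀ j, P.map (X j) = gaussianVector κ) :
    MeasurePreserving (fun ω => of fun j => X j ω) P (gaussianMatrix ι κ) := by
  refine ⟨measurable_pi_iff.2 hmeas, ?_⟩
  have hlaw := (iIndepFun_iff_map_fun_eq_pi_map fun j => (hmeas j).aemeasurable).1 hindep
  simp only [hgauss] at hlaw
  exact hlaw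

variable {n : ℕ → ℕ}

lemma ae_eventually_isTypical {G : ∀ d, Ω → Matrix (Fin (n d)) (Fin d) ℝ}
    (hG : ∀ d, MeasurePreserving (G d) P (gaussianMatrix (Fin (n d)) (Fin d)))
    (hdn : ∀ᶠ d in atTop, d ≤ n d) {δ : ℝ} (hδ : 0 < δ) (hδ₂ : δ ≤ 2) :
    ∀ᵐ ω ∂P, ∀ᶠ d in atTop, IsTypical δ (n d) d (bidiagonalEntry (G d ω)) := by
  let atypical (d : ℕ) : Set Ω := {ω | d ≤ n d ∧ ¬ IsTypical δ (n d) d (bidiagonalEntry (G d ω))}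
  have hprob (d : ℕ) : P (atypical d) ≤
      ENNReal.ofReal (4 * (d * Real.exp (-(δ ^ 2 / 16) * d))) := by
    by_cases hd : d ≤ n d
    · calc P (atypical d)
        _ ≤ P (G d ⁻¹' {M | ¬ IsTypical δ (n d) d (bidiagonalEntry M)}) :=
          measure_mono fun ω hω => hω.2
        _ ≤ gaussianMatrix _ _ {M | ¬ IsTypical δ (n d) d (bidiagonalEntry M)} :=
          (hG d).measure_preimage_le _
        _ ≤ _ := by
          rw [← ofReal_measureReal]
          exact ENNReal.ofReal_le_ofReal (gaussianMatrix_not_isTypical_le hδ.le hδ₂ hd)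
    · simp [atypical, hd]
  have hsummable : Summable fun d : ℕ => 4 * (d * Real.exp (-(δ ^ 2 / 16) * d)) := by
    simpa only [pow_one] using
      (Real.summable_pow_mul_exp_neg_nat_mul 1 (r := δ ^ 2 / 16) (by positivity)).mul_left 4
  have hfinite : ∑' d, P (atypical d) ≠ ⊤ :=
    ne_top_of_le_ne_top hsummable.tsum_ofReal_ne_top (ENNReal.tsum_le_tsum hprob)
  filter_upwards [ae_eventually_notMem hfinite] with ω hω
  filter_upwards [hω, hdn] with d hd hle
  exact not_not.1 fun hnot => hd ⟨hle, hnot⟩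

theorem ae_forall_eventually_isTypical {G : ∀ d, Ω → Matrix (Fin (n d)) (Fin d) ℝ}
    (hG : ∀ d, MeasurePreserving (G d) P (gaussianMatrix (Fin (n d)) (Fin d)))
    (hdn : ∀ᶠ d in atTop, d ≤ n d) :
    ∀ᵐ ω ∂P, ∀ δ > 0, ∀ᶠ d in atTop, IsTypical δ (n d) d (bidiagonalEntry (G d ω)) := by
  have hinv (k : ℕ) : ∀ᵐ ω ∂P, ∀ᶠ d in atTop,
      IsTypical (1 / ((k : ℝ) + 1)) (n d) d (bidiagonalEntry (G d ω)) :=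
    ae_eventually_isTypical hG hdn Nat.one_div_pos_of_nat
      ((div_le_one (by positivity)).2 (by linarith [k.cast_nonneg (α := ℝ)]) |>.trans one_le_two)
  filter_upwards [ae_all_iff.2 hinv] with ω hω δ hδ
  obtain ⟨k, hk⟩ := exists_nat_one_div_lt hδ
  exact (hω k).mono fun d hd => hd.mono hk.le

end AlmostSure

section Limits

variable {n : ℕ → ℕ} {δ : ℝ}

lemma eventually_natCast_le_mul (hn : Tendsto n atTop atTop)
    (hdn : Tendsto (fun d : ℕ => (d : ℝ) / n d) atTop (nhds 0)) (hδ : 0 < δ) :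
    ∀ᶠ d : ℕ in atTop, (d : ℝ) ≤ δ * n d := by
  filter_upwards [hdn.eventually_lt_const hδ, hn.eventually_gt_atTop 0] with d hd hpos
  exact ((div_lt_iff₀ (by exact_mod_cast hpos)).1 hd).le

lemma eventually_dist_extreme_sortedEigs_le {G : ∀ d, Matrix (Fin (n d)) (Fin d) ℝ}
    (htyp : ∀ᶠ d in atTop, IsTypical δ (n d) d (bidiagonalEntry (G d)))
    (hdn : ∀ᶠ d : ℕ in atTop, (d : ℝ) ≤ δ ^ 2 * n d) (hδ : 0 < δ) (hδ₂ : δ ≤ 1 / 2) :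
    ∀ᶠ d in atTop, dist (⨆ i, sortedEigs (scaledCovariance (G d)) i) 2 ≤ 10 * δ ∧
      dist (⨅ i, sortedEigs (scaledCovariance (G d)) i) (-2) ≤ 10 * δ := by
  obtain ⟨m, hm⟩ := exists_nat_ge (1 / δ)
  rw [div_le_iff₀' hδ] at hm
  have hlarge : ∀ᶠ d : ℕ in atTop, (m + 1) / δ ≤ d :=
    tendsto_natCast_atTop_atTop.eventually_ge_atTop _
  filter_upwards [htyp, hdn, hlarge] with d htypd hdnd hd
  rw [div_le_iff₀' hδ] at hd
  exact ⟨htypd.dist_iSup_sortedEigs_le hδ.le hδ₂ hdnd hm hd,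
    htypd.dist_iInf_sortedEigs_le hδ.le hδ₂ hdnd hm hd⟩

theorem tendsto_extreme_sortedEigs (hn : Tendsto n atTop atTop)
    (hdn : Tendsto (fun d : ℕ => (d : ℝ) / n d) atTop (nhds 0))
    {G : ∀ d, Matrix (Fin (n d)) (Fin d) ℝ}
    (htyp : ∀ δ > 0, ∀ᶠ d in atTop, IsTypical δ (n d) d (bidiagonalEntry (G d))) :
    Tendsto (fun d => ⨆ i, sortedEigs (scaledCovariance (G d)) i) atTop (nhds 2) ∧
      Tendsto (fun d => ⨅ i, sortedEigs (scaledCovariance (G d)) i) atTop (nhds (-2)) := by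
  have hclose (ε : ℝ) (hε : 0 < ε) :
      ∀ᶠ d in atTop, dist (⨆ i, sortedEigs (scaledCovariance (G d)) i) 2 < ε ∧
        dist (⨅ i, sortedEigs (scaledCovariance (G d)) i) (-2) < ε := by
    obtain ⟨δ, hδ, hδ_lt⟩ := exists_between (show 0 < min (1 / 2) (ε / 10) by positivity)
    obtain ⟨hδ₂, hδε⟩ := lt_min_iff.1 hδ_lt
    filter_upwards [eventually_dist_extreme_sortedEigs_le (htyp δ hδ)
      (eventually_natCast_le_mul hn hdn (by positivity)) hδ hδ₂.le] with d hd
    exact ⟨hd.1.trans_lt (by linarith), hd.2.trans_lt (by linarith)⟩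
  exact ⟨Metric.tendsto_nhds.2 fun ε hε => (hclose ε hε).mono fun _ h => h.1,
    Metric.tendsto_nhds.2 fun ε hε => (hclose ε hε).mono fun _ h => h.2⟩

lemma tendsto_specNorm {α : Type*} {l : Filter α} {d : α → ℕ}
    {A : ∀ a, Matrix (Fin (d a)) (Fin (d a)) ℝ} {lo hi : ℝ}
    (hinf : Tendsto (fun k => ⨅ i, sortedEigs (A k) i) l (nhds lo))
    (hsup : Tendsto (fun k => ⨆ i, sortedEigs (A k) i) l (nhds hi)) :
    Tendsto (fun k => specNorm (A k)) l (nhds (max |lo| |hi|)) := by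
  simpa only [specNorm_eq_max] using hinf.abs.max hsup.abs

end Limits

/-- **Proposition 3 (Bai–Yin type limits):** for an i.i.d. standard normal sample
`N_d(0, I)` with `n(d) → ∞` and `d/n(d) → 0`, setting
`S*_d = √(n(d)/d)·(S_d − I)` where `S_d` is the sample covariance matrix, one has
`‖S*_d‖₂ → 2`, `λ_1(S*_d) → −2` and `λ_d(S*_d) → 2` almost surely as `d → ∞`. -/
theorem covStar_extreme_eigenvalues_as
    {Ωs : Type*} [MeasurableSpace Ωs] (P : Measure Ωs) [IsProbabilityMeasure P]
    (n : ℕ → ℕ) (hn : Tendsto n atTop atTop)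
    (hdn : Tendsto (fun d : ℕ => (d : ℝ) / (n d : ℝ)) atTop (nhds 0))
    (X : ∀ d : ℕ, Fin (n d) → Ωs → Fin d → ℝ)
    (hmeas : ∀ d j, Measurable (X d j))
    (hindep : ∀ d, iIndepFun (X d) P)
    (hgauss : ∀ d j,
      Measure.map (X d j) P = Measure.pi fun _ : Fin d => gaussianReal 0 1) :
    ∀ᵐ ω ∂P,
      Tendsto (fun d =>
          specNorm (Real.sqrt ((n d : ℝ) / d) •
            ((n d : ℝ)⁻¹ • ∑ j : Fin (n d), vecMulVec (X d j ω) (X d j ω) - 1)))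
        atTop (nhds 2) ∧
      Tendsto (fun d => ⨅ i : Fin d,
          sortedEigs (Real.sqrt ((n d : ℝ) / d) •
            ((n d : ℝ)⁻¹ • ∑ j : Fin (n d), vecMulVec (X d j ω) (X d j ω) - 1)) i)
        atTop (nhds (-2)) ∧
      Tendsto (fun d => ⨆ i : Fin d,
          sortedEigs (Real.sqrt ((n d : ℝ) / d) •
            ((n d : ℝ)⁻¹ • ∑ j : Fin (n d), vecMulVec (X d j ω) (X d j ω) - 1)) i)
        atTop (nhds 2) := by
  have hsample (d : ℕ) := measurePreserving_sample_gaussianMatrix (hmeas d) (hindep d) (hgauss d)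
  have hle : ∀ᶠ d in atTop, d ≤ n d := by
    filter_upwards [eventually_natCast_le_mul hn hdn one_pos] with d hd
    exact_mod_cast hd.trans_eq (one_mul _)
  filter_upwards [ae_forall_eventually_isTypical hsample hle] with ω htyp
  obtain ⟨hsup, hinf⟩ := tendsto_extreme_sortedEigs hn hdn htyp
  have hnorm := tendsto_specNorm hinf hsup
  rw [abs_neg, max_self, abs_two] at hnorm
  exact ⟨hnorm, hinf, hsup⟩
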